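/- arXiv:2002.02749 — 5 statements merged into one kernel-verified Lean document; each statement's English description precedes it below -/
import Mathlib

section
/- A feasible b-matching f is a maximum b-matching if and only if there is no feasible b-matching f' with x_i(f') ≥ x_i(f) for every vertex i and x_i(f') > x_i(f) for at least one vertex i. (That is, the Pareto optimal feasible b-matchings are exactly the maximum b-matchings.) -/
variable {V : Type*} [Fintype V] [DecidableEq V]

/-- The utility of vertex `i` under the b-matching `f`: the total weight of edges incident to `i`. -/
def bmUtil (G : SimpleGraph V) [DecidableRel G.Adj] (f : Sym2 V → ℕ) (i : V) : ℕ :=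
  ∑ e ∈ G.edgeFinset.filter (fun e => i ∈ e), f e

/-- `f` is a feasible b-matching for `(G, b)`. -/
def BMFeasible (G : SimpleGraph V) [DecidableRel G.Adj] (b : V → ℕ) (f : Sym2 V → ℕ) : Prop :=
  ∀ i, bmUtil G f i ≤ b i

/-- The size of a b-matching: the total weight over all edges. -/
def bmSize (G : SimpleGraph V) [DecidableRel G.Adj] (f : Sym2 V → ℕ) : ℕ :=
  ∑ e ∈ G.edgeFinset, f e

/-- `f` is a maximum b-matching for `(G, b)`. -/
def IsMaxBM (G : SimpleGraph V) [DecidableRel G.Adj] (b : V → ℕ) (f : Sym2 V → ℕ) : Prop :=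
  BMFeasible G b f ∧ ∀ g, BMFeasible G b g → bmSize G g ≤ bmSize G f

/-- Underdemanded vertices: unsaturated in at least one maximum b-matching. -/
def VU (G : SimpleGraph V) [DecidableRel G.Adj] (b : V → ℕ) : Set V :=
  {i | ∃ f, IsMaxBM G b f ∧ bmUtil G f i < b i}

/-- Overdemanded vertices: not underdemanded, with at least one underdemanded neighbor. -/
def VO (G : SimpleGraph V) [DecidableRel G.Adj] (b : V → ℕ) : Set V :=
  {i | i ∉ VU G b ∧ ∃ j ∈ VU G b, G.Adj i j}

/-- Perfectly demanded vertices. -/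
def VP (G : SimpleGraph V) [DecidableRel G.Adj] (b : V → ℕ) : Set V :=
  {i | i ∉ VU G b ∧ i ∉ VO G b}

/-!
Summing utilities over the vertices counts every edge twice, so a Pareto improvement strictly
increases the size. Conversely, let `f` and `g` be feasible and suppose `g` gives some vertex `i`
less than `f` does. Then `g < f` on some edge `ij`, and `g` can be raised by one there: either `j`
has spare capacity, or `j` is saturated, in which case `f < g` on another edge at `j` and one unit
is moved from that edge to `ij`. The size does not drop and `g` gets closer to `f` from below, so
iterating ends at a feasible b-matching at least as large as `g` in which every vertex has at least
its utility under `f`. If `g` was larger than `f`, this is a Pareto improvement of `f`.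
-/

/-- The total amount by which `g` falls short of `f`, pointwise excess being ignored (truncated
subtraction). It is the termination measure of the exchange argument. -/
def shortfall {ι : Type*} [Fintype ι] (f g : ι → ℕ) : ℕ :=
  ∑ a, (f a - g a)

section Shortfall

variable {ι : Type*} [Fintype ι] [DecidableEq ι] {f g : ι → ℕ} {a : ι}

theorem shortfall_add_single_of_le (h : f a ≤ g a) (n : ℕ) :
    shortfall f (g + Pi.single a n) = shortfall f g := by
  refine Finset.sum_congr rfl fun x _ => ?_
  obtain rfl | hx := eq_or_ne x a
  · simp only [Pi.add_apply, Pi.single_eq_same]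
    omega
  · simp only [Pi.add_apply, Pi.single_eq_of_ne hx, add_zero]

theorem shortfall_add_single_lt (h : g a < f a) :
    shortfall f (g + Pi.single a 1) < shortfall f g := by
  refine Finset.sum_lt_sum (fun x _ => Nat.sub_le_sub_left (Nat.le_add_right _ _) _)
    ⟨a, Finset.mem_univ a, ?_⟩
  simp only [Pi.add_apply, Pi.single_eq_same]
  omega

end Shortfall

section BMatching

variable {G : SimpleGraph V} [DecidableRel G.Adj] {b : V → ℕ} {f g : Sym2 V → ℕ} {i j : V}

theorem bmUtil_add_single {e : Sym2 V} (he : e ∈ G.edgeFinset) (f : Sym2 V → ℕ) (n : ℕ) (i : V) :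
    bmUtil G (f + Pi.single e n) i = bmUtil G f i + if i ∈ e then n else 0 := by
  simp only [bmUtil, Pi.add_apply, Finset.sum_add_distrib, Finset.sum_pi_single',
    Finset.mem_filter, he, true_and]

theorem bmSize_add_single {e : Sym2 V} (he : e ∈ G.edgeFinset) (f : Sym2 V → ℕ) (n : ℕ) :
    bmSize G (f + Pi.single e n) = bmSize G f + n := by
  simp only [bmSize, Pi.add_apply, Finset.sum_add_distrib, Finset.sum_pi_single', he, if_true]

theorem sum_bmUtil (G : SimpleGraph V) [DecidableRel G.Adj] (f : Sym2 V → ℕ) :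
    ∑ i, bmUtil G f i = 2 * bmSize G f := by
  simp only [bmUtil, bmSize, Finset.sum_filter]
  rw [Finset.sum_comm, Finset.mul_sum]
  refine Finset.sum_congr rfl fun e he => ?_
  have endpoints : Finset.univ.filter (· ∈ e) = e.toFinset := by ext; simp
  rw [← Finset.sum_filter, Finset.sum_const, endpoints,
    SimpleGraph.card_toFinset_mem_edgeFinset ⟨e, he⟩, smul_eq_mul]

theorem bmSize_lt_bmSize_iff_of_bmUtil_le (hle : ∀ i, bmUtil G f i ≤ bmUtil G g i) :
    bmSize G f < bmSize G g ↔ ∃ i, bmUtil G f i < bmUtil G g i := by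
  calc bmSize G f < bmSize G g
      ↔ ∑ i, bmUtil G f i < ∑ i, bmUtil G g i := by rw [sum_bmUtil, sum_bmUtil]; omega
    _ ↔ ∃ i, bmUtil G f i < bmUtil G g i :=
      ⟨fun h => (Finset.exists_lt_of_sum_lt h).imp fun _ => And.right,
        fun ⟨i, hi⟩ => Finset.sum_lt_sum (fun i _ => hle i) ⟨i, Finset.mem_univ i, hi⟩⟩

theorem exists_adj_lt_of_bmUtil_lt (h : bmUtil G g i < bmUtil G f i) :
    ∃ j, G.Adj i j ∧ g s(i, j) < f s(i, j) := by
  obtain ⟨e, he, hlt⟩ := Finset.exists_lt_of_sum_lt h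
  obtain ⟨hedge, j, rfl⟩ := Finset.mem_filter.1 he
  exact ⟨j, SimpleGraph.mem_edgeFinset.1 hedge, hlt⟩

theorem exists_adj_gt_of_bmUtil_le (h : bmUtil G f j ≤ bmUtil G g j) (hij : G.Adj i j)
    (hlt : g s(i, j) < f s(i, j)) : ∃ k, G.Adj j k ∧ f s(j, k) < g s(j, k) := by
  contrapose! h
  refine Finset.sum_lt_sum (fun e he => ?_) ⟨s(i, j), ?_, hlt⟩
  · obtain ⟨hedge, k, rfl⟩ := Finset.mem_filter.1 he
    exact h k (SimpleGraph.mem_edgeFinset.1 hedge)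
  · exact Finset.mem_filter.2 ⟨SimpleGraph.mem_edgeFinset.2 hij, Sym2.mem_mk_right i j⟩

theorem BMFeasible.of_add (h : BMFeasible G b (f + g)) : BMFeasible G b f := fun i =>
  (Finset.sum_le_sum fun e _ => Nat.le_add_right (f e) (g e)).trans (h i)

theorem BMFeasible.add_single (hg : BMFeasible G b g) (hij : G.Adj i j) (hi : bmUtil G g i < b i)
    (hj : bmUtil G g j < b j) : BMFeasible G b (g + Pi.single s(i, j) 1) := by
  intro v
  rw [bmUtil_add_single (SimpleGraph.mem_edgeFinset.2 hij)]
  split_ifs with hv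
  · obtain rfl | rfl := Sym2.mem_iff.1 hv
    exacts [hi, hj]
  · exact hg v

theorem BMFeasible.exists_shortfall_lt (hf : BMFeasible G b f) (hg : BMFeasible G b g)
    (hi : bmUtil G g i < bmUtil G f i) :
    ∃ g', BMFeasible G b g' ∧ bmSize G g ≤ bmSize G g' ∧ shortfall f g' < shortfall f g := by
  obtain ⟨j, hij, hlt⟩ := exists_adj_lt_of_bmUtil_lt hi
  have hij_edge : s(i, j) ∈ G.edgeFinset := SimpleGraph.mem_edgeFinset.2 hij
  obtain hj | hj := lt_or_ge (bmUtil G g j) (b j)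
  · exact ⟨g + Pi.single s(i, j) 1, hg.add_single hij (hi.trans_le (hf i)) hj,
      by rw [bmSize_add_single hij_edge]; omega, shortfall_add_single_lt hlt⟩
  obtain ⟨k, hjk, hgt⟩ := exists_adj_gt_of_bmUtil_le ((hf j).trans hj) hij hlt
  have hjk_edge : s(j, k) ∈ G.edgeFinset := SimpleGraph.mem_edgeFinset.2 hjk
  have hsingle : Pi.single s(j, k) 1 ≤ g :=
    update_le_iff.2 ⟨Nat.one_le_of_lt hgt, fun _ _ => Nat.zero_le _⟩
  obtain ⟨h, rfl⟩ : ∃ h, g = h + Pi.single s(j, k) 1 :=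
    ⟨g - Pi.single s(j, k) 1, (tsub_add_cancel_of_le hsingle).symm⟩
  have hi_free : bmUtil G h i < b i := by
    have := hf i
    rw [bmUtil_add_single hjk_edge] at hi
    omega
  have hj_free : bmUtil G h j < b j := by
    have := hg j
    rw [bmUtil_add_single hjk_edge, if_pos (Sym2.mem_mk_left j k)] at this
    omega
  have hle : f s(j, k) ≤ h s(j, k) := by
    simpa only [Pi.add_apply, Pi.single_eq_same, Nat.lt_add_one_iff] using hgt
  refine ⟨h + Pi.single s(i, j) 1, hg.of_add.add_single hij hi_free hj_free, ?_, ?_⟩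
  · rw [bmSize_add_single hij_edge, bmSize_add_single hjk_edge]
  · rw [shortfall_add_single_of_le hle]
    exact shortfall_add_single_lt ((Nat.le_add_right _ _).trans_lt hlt)

theorem BMFeasible.exists_bmSize_le_and_bmUtil_le (hf : BMFeasible G b f) (hg : BMFeasible G b g) :
    ∃ g', BMFeasible G b g' ∧ bmSize G g ≤ bmSize G g' ∧ ∀ i, bmUtil G f i ≤ bmUtil G g' i := by
  induction hn : shortfall f g using Nat.strong_induction_on generalizing g with
  | _ n ih =>
    by_cases! hle : ∀ i, bmUtil G f i ≤ bmUtil G g i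
    · exact ⟨g, hg, le_rfl, hle⟩
    obtain ⟨i, hi⟩ := hle
    obtain ⟨h, hh, hgh, hlt⟩ := hf.exists_shortfall_lt hg hi
    obtain ⟨g', hg', hhg', hfg'⟩ := ih _ (hlt.trans_eq hn) hh rfl
    exact ⟨g', hg', hgh.trans hhg', hfg'⟩

end BMatching

/-- a feasible b-matching is maximum iff it is Pareto optimal. -/
theorem stmt_2 (G : SimpleGraph V) [DecidableRel G.Adj] (b : V → ℕ)
    (f : Sym2 V → ℕ) (hf : BMFeasible G b f) :
    IsMaxBM G b f ↔
      ¬ ∃ g, BMFeasible G b g ∧ (∀ i, bmUtil G f i ≤ bmUtil G g i) ∧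
        (∃ i, bmUtil G f i < bmUtil G g i) := by
  constructor
  · rintro ⟨-, hmax⟩ ⟨g, hg, hle, hlt⟩
    exact (hmax g hg).not_gt ((bmSize_lt_bmSize_iff_of_bmUtil_le hle).2 hlt)
  · refine fun hpareto => ⟨hf, fun h hh => ?_⟩
    by_contra! hlt
    obtain ⟨g, hg, hsize, hle⟩ := hf.exists_bmSize_le_and_bmUtil_le hh
    exact hpareto ⟨g, hg, hle, (bmSize_lt_bmSize_iff_of_bmUtil_le hle).1 (hlt.trans_le hsize)⟩
end

section
/- If the graph G is bipartite, then no two vertices of V^U are adjacent in G; that is, the set of vertices left unsaturated by some maximum b-matching forms an independent set. -/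
variable {V : Type*} [Fintype V] [DecidableEq V]

/-!
By weighted Kőnig duality, a bipartite graph has a vertex cover `C` and a feasible b-matching of size
`∑ v ∈ C, b v`. Complementary slackness then shows that every maximum b-matching saturates every
vertex of `C`, so the underdemanded vertices lie in the complement of a vertex cover.

For the duality, take `C` of minimum weight. If `X ⊆ C` is independent, exchanging `X` for its
neighbors outside `C` gives another cover, so those neighbors weigh at least as much as `X`. In a
bipartite graph this holds for all `X ⊆ C`, since the two color classes of `X` have disjoint
neighborhoods. This is Hall's condition for matching the `b v` copies of each `v ∈ C` into copies of
its neighbors outside `C`.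
-/

open Finset

theorem exists_injective_sigma_of_sum_le_sum_biUnion {ι α : Type*} [DecidableEq α]
    (t : ι → Finset α) (a : ι → ℕ) (b : α → ℕ)
    (hall : ∀ X : Finset ι, ∑ i ∈ X, a i ≤ ∑ x ∈ X.biUnion t, b x) :
    ∃ φ : (Σ i, Fin (a i)) → Σ x, Fin (b x),
      Function.Injective φ ∧ ∀ p, (φ p).1 ∈ t p.1 := by
  classical
  let copies (p : Σ i, Fin (a i)) : Finset (Σ x, Fin (b x)) := (t p.1).sigma fun _ => univ
  suffices h : ∀ P : Finset (Σ i, Fin (a i)), #P ≤ #(P.biUnion copies) by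
    obtain ⟨φ, hinj, hmem⟩ := (all_card_le_biUnion_card_iff_exists_injective copies).1 h
    exact ⟨φ, hinj, fun p => (mem_sigma.1 (hmem p)).1⟩
  intro P
  have hP : P ⊆ (P.image Sigma.fst).sigma fun _ => univ := fun p hp =>
    mem_sigma.2 ⟨mem_image_of_mem _ hp, mem_univ _⟩
  have hcopies : P.biUnion copies = ((P.image Sigma.fst).biUnion t).sigma fun _ => univ := by
    ext ⟨x, k⟩
    simp [copies]
  calc #P ≤ #((P.image Sigma.fst).sigma fun i => (univ : Finset (Fin (a i)))) := card_le_card hP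
    _ = ∑ i ∈ P.image Sigma.fst, a i := by simp
    _ ≤ ∑ x ∈ (P.image Sigma.fst).biUnion t, b x := hall _
    _ = #(P.biUnion copies) := by simp [hcopies]

section EdgeMultiplicity

variable {ι : Type*} [Fintype ι]

/-- The b-matching given by a finite family of edges, viewed as a multiset: each edge is weighted by
the number of its occurrences in the family. -/
def edgeMultiplicity (ε : ι → Sym2 V) (e : Sym2 V) : ℕ := #{x | ε x = e}

variable {G : SimpleGraph V} [DecidableRel G.Adj] {ε : ι → Sym2 V}

theorem bmSize_edgeMultiplicity (hε : ∀ x, ε x ∈ G.edgeSet) :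
    bmSize G (edgeMultiplicity ε) = Fintype.card ι :=
  (card_eq_sum_card_fiberwise fun x _ => by simpa using hε x).symm

theorem bmUtil_edgeMultiplicity (hε : ∀ x, ε x ∈ G.edgeSet) (v : V) :
    bmUtil G (edgeMultiplicity ε) v = #{x | v ∈ ε x} := by
  refine (sum_card_fiberwise_eq_card_filter univ _ ε).trans ?_
  simp [hε]

end EdgeMultiplicity

variable {G : SimpleGraph V} {b : V → ℕ} {C X : Finset V}

section MinWeightCover

/-- `C` is a vertex cover of `G` of minimum total weight with respect to the vertex weights `b`; the
dual notion to a maximum b-matching. -/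
def IsMinWeightCover (G : SimpleGraph V) (b : V → ℕ) (C : Finset V) : Prop :=
  G.IsVertexCover C ∧ ∀ D : Finset V, G.IsVertexCover D → ∑ v ∈ C, b v ≤ ∑ v ∈ D, b v

theorem exists_isMinWeightCover {W : Type*} [Finite W] (G : SimpleGraph W) (b : W → ℕ) :
    ∃ C, IsMinWeightCover G b C := by
  cases nonempty_fintype W
  exact Set.exists_min_image {C : Finset W | G.IsVertexCover C} (fun C => ∑ v ∈ C, b v)
    (Set.toFinite _) ⟨univ, by simp⟩

variable [DecidableRel G.Adj]

/-- The neighbors of `v` outside `C`, the vertices with which `v` may be matched in the proof of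
Kőnig duality. -/
def outsideNeighbors (G : SimpleGraph V) [DecidableRel G.Adj] (C : Finset V) (v : V) : Finset V :=
  G.neighborFinset v \ C

theorem mem_outsideNeighbors {v w : V} : w ∈ outsideNeighbors G C v ↔ G.Adj v w ∧ w ∉ C := by
  simp [outsideNeighbors]

theorem isVertexCover_sdiff_union_outsideNeighbors (hC : G.IsVertexCover C)
    (hX : G.IsIndepSet X) :
    G.IsVertexCover ↑(C \ X ∪ X.biUnion (outsideNeighbors G C)) := by
  have cover_of_mem {v w : V} (hvw : G.Adj v w) (hv : v ∈ C) :
      v ∈ C \ X ∪ X.biUnion (outsideNeighbors G C) ∨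
        w ∈ C \ X ∪ X.biUnion (outsideNeighbors G C) := by
    have hnot : v ∈ X → w ∉ X := fun hv hw => hX hv hw hvw.ne hvw
    simp only [mem_union, mem_sdiff, mem_biUnion, mem_outsideNeighbors]
    grind
  intro v w hvw
  rcases hC hvw with hv | hw
  · exact cover_of_mem hvw hv
  · exact (cover_of_mem hvw.symm hw).symm

theorem IsMinWeightCover.sum_le_of_isIndepSet (hC : IsMinWeightCover G b C) (hXC : X ⊆ C)
    (hX : G.IsIndepSet X) :
    ∑ v ∈ X, b v ≤ ∑ v ∈ X.biUnion (outsideNeighbors G C), b v := by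
  have hdisj : Disjoint (C \ X) (X.biUnion (outsideNeighbors G C)) := by
    refine (disjoint_biUnion_right _ _ _).2 fun v _ => ?_
    exact disjoint_sdiff.mono_left sdiff_subset
  refine le_of_add_le_add_left (a := ∑ v ∈ C \ X, b v) ?_
  calc ∑ v ∈ C \ X, b v + ∑ v ∈ X, b v
      = ∑ v ∈ C, b v := sum_sdiff hXC
    _ ≤ ∑ v ∈ C \ X ∪ X.biUnion (outsideNeighbors G C), b v :=
      hC.2 _ (isVertexCover_sdiff_union_outsideNeighbors hC.1 hX)
    _ = ∑ v ∈ C \ X, b v + ∑ v ∈ X.biUnion (outsideNeighbors G C), b v := sum_union hdisj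

theorem IsMinWeightCover.sum_le_of_coloring (hC : IsMinWeightCover G b C) (c : G.Coloring Bool)
    (hXC : X ⊆ C) :
    ∑ v ∈ X, b v ≤ ∑ v ∈ X.biUnion (outsideNeighbors G C), b v := by
  set N := X.biUnion (outsideNeighbors G C)
  have hindep (k : Bool) : G.IsIndepSet ↑{v ∈ X | c v = k} := fun v hv w hw _ hvw =>
    c.valid hvw ((mem_filter.1 hv).2.trans (mem_filter.1 hw).2.symm)
  have hneighbors (k : Bool) :
      {v ∈ X | c v = k}.biUnion (outsideNeighbors G C) ⊆ {w ∈ N | c w = !k} := by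
    intro w hw
    obtain ⟨v, hv, hvw⟩ := mem_biUnion.1 hw
    obtain ⟨hvX, rfl⟩ := mem_filter.1 hv
    exact mem_filter.2 ⟨mem_biUnion.2 ⟨v, hvX, hvw⟩,
      Bool.eq_not_of_ne (c.valid (mem_outsideNeighbors.1 hvw).1).symm⟩
  calc ∑ v ∈ X, b v
      = ∑ k, ∑ v ∈ X with c v = k, b v := (sum_fiberwise X c b).symm
    _ ≤ ∑ k, ∑ w ∈ N with c w = !k, b w := sum_le_sum fun k _ =>
      (hC.sum_le_of_isIndepSet ((filter_subset _ _).trans hXC) (hindep k)).trans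
        (sum_le_sum_of_subset (hneighbors k))
    _ = ∑ k, ∑ w ∈ N with c w = k, b w := Fintype.sum_equiv Equiv.boolNot _ _ fun _ => rfl
    _ = ∑ w ∈ N, b w := sum_fiberwise N c b

end MinWeightCover

section Duality

variable [DecidableRel G.Adj]

theorem bmFeasible_edgeMultiplicity_of_injective {φ : (Σ v : C, Fin (b v)) → Σ v, Fin (b v)}
    (hinj : Function.Injective φ) (hφ : ∀ p, (φ p).1 ∈ outsideNeighbors G C p.1) :
    BMFeasible G b (edgeMultiplicity fun p => s(p.1.1, (φ p).1)) := by
  intro v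
  rw [bmUtil_edgeMultiplicity fun p => (mem_outsideNeighbors.1 (hφ p)).1]
  by_cases hv : v ∈ C
  · have hcopies : ({p | v ∈ s(p.1.1, (φ p).1)} : Finset (Σ v : C, Fin (b v))) ⊆
        univ.map (.sigmaMk ⟨v, hv⟩) := by
      rintro ⟨u, k⟩ hp
      obtain rfl | rfl := Sym2.mem_iff.1 (mem_filter.1 hp).2
      · exact mem_map_of_mem _ (mem_univ k)
      · exact absurd hv (mem_outsideNeighbors.1 (hφ _)).2
    simpa using card_le_card hcopies
  · have hmaps : ∀ p ∈ ({p | v ∈ s(p.1.1, (φ p).1)} : Finset (Σ v : C, Fin (b v))),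
        φ p ∈ (univ : Finset (Fin (b v))).map (.sigmaMk v) := by
      intro p hp
      obtain rfl | rfl := Sym2.mem_iff.1 (mem_filter.1 hp).2
      · exact absurd p.1.2 hv
      · exact mem_map_of_mem _ (mem_univ (φ p).2)
    simpa using card_le_card_of_injOn φ hmaps hinj.injOn

theorem exists_bmFeasible_bmSize_eq_sum
    (hall : ∀ X ⊆ C, ∑ v ∈ X, b v ≤ ∑ v ∈ X.biUnion (outsideNeighbors G C), b v) :
    ∃ f, BMFeasible G b f ∧ bmSize G f = ∑ v ∈ C, b v := by
  obtain ⟨φ, hinj, hφ⟩ := exists_injective_sigma_of_sum_le_sum_biUnion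
    (fun v : C => outsideNeighbors G C v) (fun v => b v) b fun X => by
      have := hall (X.map (.subtype _)) (map_subtype_subset X)
      rwa [sum_map, map_eq_image, image_biUnion] at this
  refine ⟨_, bmFeasible_edgeMultiplicity_of_injective hinj hφ, ?_⟩
  rw [bmSize_edgeMultiplicity fun p => (mem_outsideNeighbors.1 (hφ p)).1]
  simp [sum_attach C b]

theorem exists_isVertexCover_bmSize_eq_sum (hG : G.Colorable 2) (b : V → ℕ) :
    ∃ C : Finset V, G.IsVertexCover C ∧ ∃ f, BMFeasible G b f ∧ bmSize G f = ∑ v ∈ C, b v := by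
  obtain ⟨C, hC⟩ := exists_isMinWeightCover G b
  have c : G.Coloring Bool := hG.toColoring (by simp)
  exact ⟨C, hC.1, exists_bmFeasible_bmSize_eq_sum fun X => hC.sum_le_of_coloring c⟩

theorem bmSize_le_sum_bmUtil (hC : G.IsVertexCover C) (f : Sym2 V → ℕ) :
    bmSize G f ≤ ∑ v ∈ C, bmUtil G f v := by
  have card_cover_pos : ∀ e ∈ G.edgeFinset, 0 < #{v ∈ C | v ∈ e} := by
    intro e he
    rw [card_pos]
    induction e with | h u w
    rcases hC (SimpleGraph.mem_edgeFinset.1 he) with hu | hw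
    · exact ⟨u, mem_filter.2 ⟨hu, Sym2.mem_mk_left u w⟩⟩
    · exact ⟨w, mem_filter.2 ⟨hw, Sym2.mem_mk_right u w⟩⟩
  calc ∑ e ∈ G.edgeFinset, f e
      ≤ ∑ e ∈ G.edgeFinset, ∑ v ∈ C with v ∈ e, f e := sum_le_sum fun e he => by
        simpa using Nat.mul_le_mul_right (f e) (card_cover_pos e he)
    _ = ∑ v ∈ C, bmUtil G f v := sum_comm' (by simp only [mem_filter]; tauto)

theorem IsMaxBM.bmUtil_eq_of_mem {f g : Sym2 V → ℕ} (hf : IsMaxBM G b f)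
    (hC : G.IsVertexCover C) (hg : BMFeasible G b g) (hsize : bmSize G g = ∑ v ∈ C, b v)
    {v : V} (hv : v ∈ C) : bmUtil G f v = b v := by
  have hle : ∀ u ∈ C, bmUtil G f u ≤ b u := fun u _ => hf.1 u
  have hsum : ∑ u ∈ C, b u ≤ ∑ u ∈ C, bmUtil G f u :=
    calc ∑ u ∈ C, b u = bmSize G g := hsize.symm
      _ ≤ bmSize G f := hf.2 g hg
      _ ≤ ∑ u ∈ C, bmUtil G f u := bmSize_le_sum_bmUtil hC f
  exact (sum_eq_sum_iff_of_le hle).1 ((sum_le_sum hle).antisymm hsum) v hv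

end Duality

/-- if `G` is bipartite then the underdemanded set `V^U` is independent. -/
theorem stmt_7 (G : SimpleGraph V) [DecidableRel G.Adj] (b : V → ℕ)
    (hbip : G.Colorable 2) :
    ∀ i ∈ VU G b, ∀ j ∈ VU G b, ¬ G.Adj i j := by
  obtain ⟨C, hC, g, hg, hsize⟩ := exists_isVertexCover_bmSize_eq_sum hbip b
  have notMem_cover : ∀ i ∈ VU G b, i ∉ C := by
    rintro i ⟨f, hf, hi⟩ hiC
    exact hi.ne (hf.bmUtil_eq_of_mem hC hg hsize hiC)
  intro i hi j hj hij
  exact (hC hij).elim (notMem_cover i hi) (notMem_cover j hj)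
end

section
/- Let m be the maximum value of a feasible transportation flow. Then every feasible transportation flow of value m lies in the convex hull (in ℝ^{S×D}) of the set of integer-valued feasible transportation flows of value m. In particular, every fractional maximum flow is a convex combination of integral maximum flows. -/
/-- A feasible transportation flow for admissible pairs `E`, supplies `s` and demands `d`. -/
def TFeasible {S D : Type*} [Fintype S] [Fintype D] (E : Set (S × D))
    (s : S → ℕ) (d : D → ℕ) (g : S × D → ℝ) : Prop :=
  (∀ p, 0 ≤ g p) ∧ (∀ p, p ∉ E → g p = 0) ∧
  (∀ i, ∑ j, g (i, j) ≤ (s i : ℝ)) ∧ (∀ j, ∑ i, g (i, j) ≤ (d j : ℝ))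

/-- The value of a transportation flow. -/
def TValue {S D : Type*} [Fintype S] [Fintype D] (g : S × D → ℝ) : ℝ :=
  ∑ p, g p

/-!
The flows maximizing a linear functional form an exposed face of the compact convex set of feasible
flows, so by Krein–Milman it suffices to show that every extreme feasible flow is integral.

Adjoin a slack row and a slack column, turning the capacity constraints into equations: the
resulting table is nonnegative and all its line sums are integers. A line containing a non-integral
entry then contains a second one. Hence the number of non-integral entries is at least the number
of lines they meet, whereas the corresponding zero-line-sum equations satisfy one linear relation
(the row sums and the column sums have the same total). So there is a nonzero table with zero line
sums supported on the non-integral entries. These entries are positive, so the flow can be perturbed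
by a small multiple of that table in both directions, and it is not extreme.
-/

open scoped Finset

section ZeroSumTable

variable {ι κ R C K A : Type*}

lemma exists_ne_zero_forall_apply_eq_zero_of_card_lt [Field K] {F : Finset ι} {T : Finset κ}
    (φ : κ → (ι → K) →ₗ[K] K) (hcard : #T < #F) :
    ∃ h : ι → K, h ≠ 0 ∧ (∀ p ∉ F, h p = 0) ∧ ∀ k ∈ T, φ k h = 0 := by
  let extend : (F → K) →ₗ[K] ι → K := Function.ExtendByZero.linearMap K Subtype.val
  let L : (F → K) →ₗ[K] T → K := LinearMap.pi fun k => φ k ∘ₗ extend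
  have hker : LinearMap.ker L ≠ ⊥ := LinearMap.ker_ne_bot_of_finrank_lt (by simpa using hcard)
  obtain ⟨x, hx, hx0⟩ := (Submodule.ne_bot_iff _).1 hker
  refine ⟨extend x, fun h0 => hx0 ?_, fun p hp => ?_, fun k hk => congrFun hx ⟨k, hk⟩⟩
  · exact Function.extend_injective Subtype.val_injective (0 : ι → K)
      (h0.trans (map_zero extend).symm)
  · exact Function.extend_apply' _ _ _ (by simpa using hp)

lemma two_mul_card_image_le_card [DecidableEq κ] {f : ι → κ} {F : Finset ι}
    (hF : ∀ a ∈ F, ∃ b ∈ F, b ≠ a ∧ f b = f a) : 2 * #(F.image f) ≤ #F := by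
  refine Finset.mul_card_image_le_card F 2 fun k hk => ?_
  obtain ⟨a, ha, rfl⟩ := Finset.mem_image.1 hk
  obtain ⟨b, hb, hne, hfb⟩ := hF a ha
  exact Finset.one_lt_card.2 ⟨b, by simp [hb, hfb], a, by simp [ha], hne⟩

lemma exists_ne_notMem_of_sum_mem [Fintype ι] [AddCommGroup A] {Z : AddSubgroup A} {f : ι → A}
    (hsum : ∑ k, f k ∈ Z) {j : ι} (hj : f j ∉ Z) : ∃ k, k ≠ j ∧ f k ∉ Z := by
  classical
  by_contra! hmem
  have hrest : ∑ k ∈ Finset.univ.erase j, f k ∈ Z :=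
    sum_mem fun k hk => hmem k (Finset.ne_of_mem_erase hk)
  rw [← Finset.add_sum_erase _ f (Finset.mem_univ j)] at hsum
  exact hj ((Z.add_mem_cancel_right hrest).1 hsum)

variable [Fintype R] [Fintype C]

/-- A table indexed by `R × C` all of whose row sums and column sums vanish: the directions in which
a table can be perturbed without changing its line sums. -/
structure IsZeroSumTable [AddCommMonoid A] (h : R × C → A) : Prop where
  row (i : R) : ∑ j, h (i, j) = 0
  col (j : C) : ∑ i, h (i, j) = 0

lemma IsZeroSumTable.const_smul [AddCommMonoid A] [DistribSMul K A] {h : R × C → A}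
    (hh : IsZeroSumTable h) (t : K) : IsZeroSumTable (t • h) where
  row i := by simp [← Finset.smul_sum, hh.row i]
  col j := by simp [← Finset.smul_sum, hh.col j]

lemma IsZeroSumTable.neg [AddCommGroup A] {h : R × C → A} (hh : IsZeroSumTable h) :
    IsZeroSumTable (-h) where
  row i := by simp [hh.row i]
  col j := by simp [hh.col j]

lemma IsZeroSumTable.of_row_of_col_ne [AddCommMonoid A] {h : R × C → A} (j₀ : C)
    (hrow : ∀ i, ∑ j, h (i, j) = 0) (hcol : ∀ j ≠ j₀, ∑ i, h (i, j) = 0) :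
    IsZeroSumTable h where
  row := hrow
  col j := by
    obtain rfl | hj := eq_or_ne j j₀
    · calc ∑ i, h (i, j) = ∑ j', ∑ i, h (i, j') := (Fintype.sum_eq_single j hcol).symm
        _ = ∑ i, ∑ j', h (i, j') := Finset.sum_comm
        _ = 0 := Finset.sum_eq_zero fun i _ => hrow i
    · exact hcol j hj

variable (K)

lemma exists_isZeroSumTable_of_forall_exists_ne [Field K] {F : Finset (R × C)} (hF : F.Nonempty)
    (hrow : ∀ p ∈ F, ∃ q ∈ F, q ≠ p ∧ q.1 = p.1) (hcol : ∀ p ∈ F, ∃ q ∈ F, q ≠ p ∧ q.2 = p.2) :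
    ∃ h : R × C → K, h ≠ 0 ∧ (∀ p ∉ F, h p = 0) ∧ IsZeroSumTable h := by
  classical
  obtain ⟨p₀, hp₀⟩ := hF
  let lines : Finset (R ⊕ C) := (F.image Prod.fst).disjSum ((F.image Prod.snd).erase p₀.2)
  let lineSum : R ⊕ C → (R × C → K) →ₗ[K] K :=
    Sum.elim (fun i => ∑ j, LinearMap.proj (i, j)) (fun j => ∑ i, LinearMap.proj (i, j))
  have hcard : #lines < #F := by
    have hrows := two_mul_card_image_le_card hrow
    have hcols := two_mul_card_image_le_card hcol
    have herase := Finset.card_erase_lt_of_mem (Finset.mem_image_of_mem Prod.snd hp₀)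
    rw [Finset.card_disjSum]
    lia
  obtain ⟨h, hne, hsupp, hlines⟩ := exists_ne_zero_forall_apply_eq_zero_of_card_lt lineSum hcard
  refine ⟨h, hne, hsupp, .of_row_of_col_ne p₀.2 (fun i => ?_) fun j hj => ?_⟩
  · by_cases hi : i ∈ F.image Prod.fst
    · simpa [lineSum] using hlines (.inl i) (by simpa [lines] using hi)
    · exact Finset.sum_eq_zero fun j _ => hsupp _ fun hp => hi (Finset.mem_image_of_mem _ hp)
  · by_cases hjF : j ∈ F.image Prod.snd
    · simpa [lineSum] using hlines (.inr j) (by simpa [lines, hj] using hjF)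
    · exact Finset.sum_eq_zero fun i _ => hsupp _ fun hp => hjF (Finset.mem_image_of_mem _ hp)

lemma exists_isZeroSumTable_of_notMem [Field K] [AddCommGroup A] {Z : AddSubgroup A}
    {a : R × C → A} (hrow : ∀ i, ∑ j, a (i, j) ∈ Z) (hcol : ∀ j, ∑ i, a (i, j) ∈ Z)
    {p₀ : R × C} (hp₀ : a p₀ ∉ Z) :
    ∃ h : R × C → K, h ≠ 0 ∧ (∀ p, a p ∈ Z → h p = 0) ∧ IsZeroSumTable h := by
  classical
  let F : Finset (R × C) := {p | a p ∉ Z}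
  obtain ⟨h, hne, hsupp, hh⟩ := exists_isZeroSumTable_of_forall_exists_ne K (F := F)
    ⟨p₀, by simpa [F] using hp₀⟩
    (fun ⟨i, j⟩ hp => by
      obtain ⟨k, hkj, hk⟩ := exists_ne_notMem_of_sum_mem (hrow i) (j := j) (by simpa [F] using hp)
      exact ⟨(i, k), by simpa [F] using hk, by simpa using hkj, rfl⟩)
    (fun ⟨i, j⟩ hp => by
      obtain ⟨k, hki, hk⟩ := exists_ne_notMem_of_sum_mem (hcol j) (j := i) (by simpa [F] using hp)
      exact ⟨(k, j), by simpa [F] using hk, by simpa using hki, rfl⟩)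
  exact ⟨h, hne, fun p hp => hsupp p (by simpa [F] using hp), hh⟩

end ZeroSumTable

section Perturbation

open Filter Topology

lemma exists_pos_forall_abs_mul_le {ι : Type*} [Finite ι] {a h : ι → ℝ} (ha : ∀ p, 0 ≤ a p)
    (hsupp : ∀ p, a p = 0 → h p = 0) : ∃ t > 0, ∀ p, |t * h p| ≤ a p := by
  have hsmall : ∀ᶠ t : ℝ in 𝓝 0, ∀ p, |t * h p| ≤ a p := by
    refine eventually_all.2 fun p => ?_
    obtain hp | hp := (ha p).eq_or_lt
    · simp [hsupp p hp.symm, ha p]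
    · have hlim : Tendsto (fun t => |t * h p|) (𝓝 0) (𝓝 0) :=
        Continuous.tendsto' (by fun_prop) _ _ (by simp)
      exact hlim.eventually_le_const hp
  obtain ⟨t, ht, htpos⟩ :=
    ((hsmall.filter_mono nhdsWithin_le_nhds).and (self_mem_nhdsWithin (s := Set.Ioi 0))).exists
  exact ⟨t, htpos, ht⟩

lemma eq_zero_of_mem_extremePoints_of_add_mem_of_sub_mem {𝕜 V : Type*} [Field 𝕜] [LinearOrder 𝕜]
    [IsStrictOrderedRing 𝕜] [AddCommGroup V] [Module 𝕜 V] {P : Set V} {x v : V}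
    (hx : x ∈ P.extremePoints 𝕜) (hadd : x + v ∈ P) (hsub : x - v ∈ P) : v = 0 :=
  add_eq_left.1 (hx.2 hadd hsub (mem_openSegment_add_sub x v))

end Perturbation

section SlackTable

variable {S D : Type*} [Fintype S] [Fintype D] {E : Set (S × D)} {s : S → ℕ} {d : D → ℕ}
  {g : S × D → ℝ}

/-- The table of a flow with a slack row and a slack column, both indexed by `none`, holding the
unused capacities. The corner entry is the value of the flow, which makes the slack lines sum to
the total demand and the total supply. -/
def slackTable (s : S → ℕ) (d : D → ℕ) (g : S × D → ℝ) : Option S × Option D → ℝ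
  | (some i, some j) => g (i, j)
  | (some i, none) => s i - ∑ j, g (i, j)
  | (none, some j) => d j - ∑ i, g (i, j)
  | (none, none) => TValue g

lemma sum_row_slackTable (s : S → ℕ) (d : D → ℕ) (g : S × D → ℝ) (i : Option S) :
    ∑ j, slackTable s d g (i, j) = ((i.elim (∑ j, d j) s : ℕ) : ℝ) := by
  cases i with
  | none => simp [slackTable, TValue, Fintype.sum_option, Fintype.sum_prod_type_right]
  | some i => simp [slackTable, Fintype.sum_option]

lemma sum_col_slackTable (s : S → ℕ) (d : D → ℕ) (g : S × D → ℝ) (j : Option D) :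
    ∑ i, slackTable s d g (i, j) = ((j.elim (∑ i, s i) d : ℕ) : ℝ) := by
  cases j with
  | none => simp [slackTable, TValue, Fintype.sum_option, Fintype.sum_prod_type]
  | some j => simp [slackTable, Fintype.sum_option]

lemma tfeasible_iff_slackTable_nonneg :
    TFeasible E s d g ↔ (∀ p, 0 ≤ slackTable s d g p) ∧ ∀ p ∉ E, g p = 0 := by
  refine ⟨fun ⟨hpos, hE, hrow, hcol⟩ => ⟨?_, hE⟩, fun ⟨hpos, hE⟩ =>
    ⟨fun p => hpos (some p.1, some p.2), hE, fun i => sub_nonneg.1 (hpos (some i, none)),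
      fun j => sub_nonneg.1 (hpos (none, some j))⟩⟩
  rintro ⟨_ | i, _ | j⟩
  exacts [Finset.sum_nonneg fun p _ => hpos p, sub_nonneg.2 (hcol j), sub_nonneg.2 (hrow i),
    hpos (i, j)]

lemma slackTable_add_of_isZeroSumTable {h : Option S × Option D → ℝ} (hh : IsZeroSumTable h) :
    slackTable s d (g + h ∘ Prod.map some some) = slackTable s d g + h := by
  have hrow (i : Option S) : ∑ j, h (i, some j) = -h (i, none) := by
    linarith [hh.row i, Fintype.sum_option fun j => h (i, j)]
  have hcol (j : Option D) : ∑ i, h (some i, j) = -h (none, j) := by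
    linarith [hh.col j, Fintype.sum_option fun i => h (i, j)]
  ext ⟨_ | i, _ | j⟩
  · simp [slackTable, TValue, Finset.sum_add_distrib, Fintype.sum_prod_type, hrow, hcol]
  all_goals simp [slackTable, Finset.sum_add_distrib, hrow, hcol]
  all_goals ring

lemma TFeasible.add_comp_some {h : Option S × Option D → ℝ} (hg : TFeasible E s d g)
    (hh : IsZeroSumTable h) (hle : ∀ p, |h p| ≤ slackTable s d g p) :
    TFeasible E s d (g + h ∘ Prod.map some some) := by
  refine tfeasible_iff_slackTable_nonneg.2 ⟨fun p => ?_, fun p hp => ?_⟩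
  · rw [slackTable_add_of_isZeroSumTable hh, Pi.add_apply]
    linarith [(abs_le.1 (hle p)).1]
  · have hgp : g p = 0 := hg.2.1 p hp
    have hhp : |h (some p.1, some p.2)| ≤ 0 := (hle (some p.1, some p.2)).trans_eq hgp
    simpa [hgp, Prod.map] using hhp

end SlackTable

section FlowPolytope

variable {S D : Type*} [Fintype S] [Fintype D] {E : Set (S × D)} {s : S → ℕ} {d : D → ℕ}
  {g : S × D → ℝ}

lemma exists_int_of_mem_extremePoints_setOf_tfeasible
    (hg : g ∈ {g | TFeasible E s d g}.extremePoints ℝ) (p : S × D) : ∃ n : ℤ, g p = n := by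
  let Z : AddSubgroup ℝ := (Int.castAddHom ℝ).range
  have natCast_mem (n : ℕ) : (n : ℝ) ∈ Z := ⟨n, by simp⟩
  have hfeas : TFeasible E s d g := hg.1
  by_contra hp
  obtain ⟨h, hne, hsupp, hh⟩ := exists_isZeroSumTable_of_notMem ℝ (Z := Z)
    (a := slackTable s d g) (p₀ := (some p.1, some p.2))
    (fun i => by rw [sum_row_slackTable]; exact natCast_mem _)
    (fun j => by rw [sum_col_slackTable]; exact natCast_mem _)
    (fun ⟨n, hn⟩ => hp ⟨n, hn.symm⟩)
  obtain ⟨t, ht, hle⟩ := exists_pos_forall_abs_mul_le (h := h)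
    (tfeasible_iff_slackTable_nonneg.1 hfeas).1 fun q hq => hsupp q (hq ▸ Z.zero_mem)
  have hth : IsZeroSumTable (t • h) := hh.const_smul t
  have hadd : TFeasible E s d (g + (t • h) ∘ Prod.map some some) := hfeas.add_comp_some hth hle
  have hsub : TFeasible E s d (g - (t • h) ∘ Prod.map some some) := by
    rw [sub_eq_add_neg]
    exact hfeas.add_comp_some hth.neg fun q => (abs_neg _).trans_le (hle q)
  have hzero : (t • h) ∘ Prod.map some some = (0 : S × D → ℝ) :=
    eq_zero_of_mem_extremePoints_of_add_mem_of_sub_mem hg hadd hsub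
  have hth0 : t • h = 0 := by
    simpa [hzero] using slackTable_add_of_isZeroSumTable (s := s) (d := d) (g := g) hth
  exact (smul_ne_zero ht.ne' hne) hth0

lemma TFeasible.le_supply (hg : TFeasible E s d g) (p : S × D) : g p ≤ s p.1 :=
  (Finset.single_le_sum (f := fun j => g (p.1, j)) (fun _ _ => hg.1 _)
    (Finset.mem_univ p.2)).trans (hg.2.2.1 p.1)

variable (E s d)

lemma convex_setOf_tfeasible : Convex ℝ {g | TFeasible E s d g} := by
  rintro x ⟨hx, hxE, hxs, hxd⟩ y ⟨hy, hyE, hys, hyd⟩ a b ha hb hab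
  refine ⟨fun p => ?_, fun p hp => ?_, fun i => ?_, fun j => ?_⟩
  · exact convex_Ici (0 : ℝ) (hx p) (hy p) ha hb hab
  · simp [hxE p hp, hyE p hp]
  · simpa [Finset.sum_add_distrib, Finset.mul_sum] using
      convex_Iic (s i : ℝ) (hxs i) (hys i) ha hb hab
  · simpa [Finset.sum_add_distrib, Finset.mul_sum] using
      convex_Iic (d j : ℝ) (hxd j) (hyd j) ha hb hab

lemma isClosed_setOf_tfeasible : IsClosed {g | TFeasible E s d g} := by
  simp only [TFeasible, Set.ofPred_and, Set.ofPred_forall]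
  refine .inter ?_ (.inter ?_ (.inter ?_ ?_))
  · exact isClosed_iInter fun p => isClosed_le (by fun_prop) (by fun_prop)
  · exact isClosed_iInter fun p => isClosed_iInter fun _ => isClosed_eq (by fun_prop) (by fun_prop)
  · exact isClosed_iInter fun i => isClosed_le (by fun_prop) (by fun_prop)
  · exact isClosed_iInter fun j => isClosed_le (by fun_prop) (by fun_prop)

lemma isCompact_setOf_tfeasible : IsCompact {g | TFeasible E s d g} :=
  (isCompact_univ_pi fun p : S × D => isCompact_Icc (a := (0 : ℝ)) (b := s p.1)).of_isClosed_subset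
    (isClosed_setOf_tfeasible E s d) fun _ hg p _ => ⟨hg.1 p, hg.le_supply p⟩

lemma finite_setOf_tfeasible_int :
    {g | TFeasible E s d g ∧ ∀ p, ∃ n : ℤ, g p = n}.Finite := by
  refine (Set.Finite.pi' fun p : S × D =>
    (Set.finite_Icc (0 : ℤ) (s p.1)).image ((↑) : ℤ → ℝ)).subset ?_
  rintro g ⟨hg, hint⟩ p
  obtain ⟨n, hn⟩ := hint p
  have hpos : (0 : ℝ) ≤ n := hn ▸ hg.1 p
  have hle : (n : ℝ) ≤ s p.1 := hn ▸ hg.le_supply p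
  exact ⟨n, ⟨by exact_mod_cast hpos, by exact_mod_cast hle⟩, hn.symm⟩

theorem stmt_8_general (c : (S × D → ℝ) →ₗ[ℝ] ℝ) (hg : TFeasible E s d g)
    (hmax : IsMaxOn c {h | TFeasible E s d h} g) :
    g ∈ convexHull ℝ {h | TFeasible E s d h ∧ (∀ p, ∃ n : ℤ, h p = n) ∧ c h = c g} := by
  let P : Set (S × D → ℝ) := {h | TFeasible E s d h}
  let face : Set (S × D → ℝ) := c.toContinuousLinearMap.toExposed P
  have hexposed : IsExposed ℝ P face := ContinuousLinearMap.toExposed.isExposed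
  have hvertices : face.extremePoints ℝ ⊆
      {h | TFeasible E s d h ∧ (∀ p, ∃ n : ℤ, h p = n) ∧ c h = c g} := fun h hh =>
    ⟨hh.1.1, exists_int_of_mem_extremePoints_setOf_tfeasible
      (hexposed.isExtreme.extremePoints_subset_extremePoints hh),
      le_antisymm (hmax hh.1.1) (hh.1.2 g hg)⟩
  have hfinite : (face.extremePoints ℝ).Finite :=
    (finite_setOf_tfeasible_int E s d).subset fun h hh =>
      ⟨(hvertices hh).1, (hvertices hh).2.1⟩
  have hface : convexHull ℝ (face.extremePoints ℝ) = face := by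
    rw [← (hfinite.isClosed_convexHull ℝ).closure_eq]
    exact closure_convexHull_extremePoints (hexposed.isCompact (isCompact_setOf_tfeasible E s d))
      (hexposed.convex (convex_setOf_tfeasible E s d))
  exact convexHull_mono hvertices (hface.symm ▸ ⟨hg, hmax⟩)

end FlowPolytope

/-- every feasible transportation flow of maximum value `m` lies in the convex hull
of the integer-valued feasible transportation flows of value `m`. -/
theorem stmt_8 {S D : Type*} [Fintype S] [Fintype D] (E : Set (S × D))
    (s : S → ℕ) (d : D → ℕ) (m : ℝ)
    (hm : IsGreatest {v : ℝ | ∃ g, TFeasible E s d g ∧ TValue g = v} m)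
    (g : S × D → ℝ) (hg : TFeasible E s d g) (hgm : TValue g = m) :
    g ∈ convexHull ℝ
      {h : S × D → ℝ | TFeasible E s d h ∧ (∀ p, ∃ n : ℤ, h p = n) ∧ TValue h = m} := by
  subst hgm
  have hvalue (h : S × D → ℝ) :
      (∑ p, LinearMap.proj p : (S × D → ℝ) →ₗ[ℝ] ℝ) h = TValue h := by simp [TValue]
  simpa only [hvalue] using stmt_8_general E s d (∑ p, LinearMap.proj p) hg fun h hh => by
    simpa only [hvalue, Set.mem_ofPred_eq] using hm.2 ⟨h, hh, rfl⟩
end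

section
/- Define F(λ), for λ ≥ 0, as the maximum of Σ_{(i,j)} g(i,j) over all functions g : S × D → ℝ with g(i,j) ≥ 0, g(i,j) = 0 whenever (i,j) ∉ E, Σ_{j ∈ D} g(i,j) ≤ min(λ, s_i) for every i ∈ S, and Σ_{i ∈ S} g(i,j) ≤ d_j for every j ∈ D. Then F is weakly increasing and concave on [0, ∞). -/
open scoped Pointwise

/-!
The flows feasible for capacities `c` and those feasible for `c'` combine, with nonnegative
weights `a` and `b`, into flows feasible for `a • c + b • c'`. When the capacities depend
concavely on a parameter, the parameters paired with their feasible flows therefore form a convex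
set, and maximizing the linear total flow over the fibres of a convex set gives a concave function.
-/

theorem isLUB_smul_of_pos {G M : Type*} [GroupWithZero G] [Preorder G] [Preorder M] [Zero M]
    [MulActionWithZero G M] [PosSMulMono G M] [PosSMulReflectLE G M] {V : Set M} {m : M} {a : G}
    (hV : IsLUB V m) (ha : 0 < a) : IsLUB (a • V) (a • m) :=
  (OrderIso.smulRight ha).isLUB_image'.2 hV

theorem concaveOn_of_isLUB_image {𝕜 Λ X M : Type*} [Field 𝕜] [LinearOrder 𝕜]
    [IsStrictOrderedRing 𝕜] [AddCommGroup M] [PartialOrder M] [IsOrderedAddMonoid M] [Module 𝕜 M]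
    [PosSMulMono 𝕜 M] [AddCommMonoid Λ] [Module 𝕜 Λ] [AddCommMonoid X] [SMul 𝕜 X]
    {T : Set Λ} {K : Λ → Set X} {A : Set X} {φ : X → M} {F : Λ → M}
    (hT : Convex 𝕜 T) (hφ : ConcaveOn 𝕜 A φ) (hKA : ∀ x ∈ T, K x ⊆ A)
    (hK : ∀ x ∈ T, ∀ y ∈ T, ∀ a b : 𝕜, 0 < a → 0 < b → a + b = 1 →
      a • K x + b • K y ⊆ K (a • x + b • y))
    (hF : ∀ x ∈ T, IsLUB (φ '' K x) (F x)) :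
    ConcaveOn 𝕜 T F := by
  refine concaveOn_iff_forall_pos.2 ⟨hT, fun x hx y hy a b ha hb hab ↦ ?_⟩
  have hsup : IsLUB (a • (φ '' K x) + b • (φ '' K y)) (a • F x + b • F y) :=
    (isLUB_smul_of_pos (hF x hx) ha).add (isLUB_smul_of_pos (hF y hy) hb)
  refine hsup.2 ?_
  rintro _ ⟨_, ⟨_, ⟨g, hg, rfl⟩, rfl⟩, _, ⟨_, ⟨h, hh, rfl⟩, rfl⟩, rfl⟩
  calc a • φ g + b • φ h
      ≤ φ (a • g + b • h) := hφ.2 (hKA x hx hg) (hKA y hy hh) ha.le hb.le hab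
    _ ≤ F (a • x + b • y) := (hF _ (hT hx hy ha.le hb.le hab)).1 <| Set.mem_image_of_mem φ <|
        hK x hx y hy a b ha hb hab <|
          Set.add_mem_add (Set.smul_mem_smul_set hg) (Set.smul_mem_smul_set hh)

section Flows

variable {S D M : Type*} [Fintype S] [Fintype D] [AddCommMonoid M] [Preorder M]

/-- The feasible flows of the transportation problem with admissible pairs `E`, supply capacities
`c` and demand capacities `e`: nonnegative functions on `S × D`, supported in `E`, whose row and
column sums are bounded by the capacities. -/
def feasibleFlows (E : Set (S × D)) (c : S → M) (e : D → M) : Set (S × D → M) :=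
  {g | (∀ p, 0 ≤ g p) ∧ (∀ p, p ∉ E → g p = 0) ∧
    (∀ i, ∑ j, g (i, j) ≤ c i) ∧ (∀ j, ∑ i, g (i, j) ≤ e j)}

theorem feasibleFlows_mono (E : Set (S × D)) {c c' : S → M} {e e' : D → M}
    (hc : c ≤ c') (he : e ≤ e') : feasibleFlows E c e ⊆ feasibleFlows E c' e' :=
  fun _ ⟨g_nonneg, g_supp, g_row, g_col⟩ ↦
    ⟨g_nonneg, g_supp, fun i ↦ (g_row i).trans (hc i), fun j ↦ (g_col j).trans (he j)⟩

theorem add_feasibleFlows_subset [IsOrderedAddMonoid M] (E : Set (S × D))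
    (c c' : S → M) (e e' : D → M) :
    feasibleFlows E c e + feasibleFlows E c' e' ⊆ feasibleFlows E (c + c') (e + e') := by
  rintro _ ⟨g, ⟨g_nonneg, g_supp, g_row, g_col⟩, h, ⟨h_nonneg, h_supp, h_row, h_col⟩, rfl⟩
  refine ⟨fun p ↦ add_nonneg (g_nonneg p) (h_nonneg p),
    fun p hp ↦ by simp [g_supp p hp, h_supp p hp], fun i ↦ ?_, fun j ↦ ?_⟩
  · simpa [Finset.sum_add_distrib] using add_le_add (g_row i) (h_row i)
  · simpa [Finset.sum_add_distrib] using add_le_add (g_col j) (h_col j)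

theorem smul_feasibleFlows_subset {R : Type*} [Zero R] [Preorder R] [DistribSMul R M]
    [PosSMulMono R M] (E : Set (S × D)) (c : S → M) (e : D → M) {a : R} (ha : 0 ≤ a) :
    a • feasibleFlows E c e ⊆ feasibleFlows E (a • c) (a • e) := by
  rintro _ ⟨g, ⟨g_nonneg, g_supp, g_row, g_col⟩, rfl⟩
  refine ⟨fun p ↦ smul_nonneg ha (g_nonneg p), fun p hp ↦ by simp [g_supp p hp],
    fun i ↦ ?_, fun j ↦ ?_⟩
  · simpa [Finset.smul_sum] using smul_le_smul_of_nonneg_left (g_row i) ha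
  · simpa [Finset.smul_sum] using smul_le_smul_of_nonneg_left (g_col j) ha

end Flows

theorem smul_feasibleFlows_add_smul_feasibleFlows_subset {𝕜 Λ M S D : Type*} [Semiring 𝕜]
    [PartialOrder 𝕜] [AddCommMonoid M] [PartialOrder M] [IsOrderedAddMonoid M] [Module 𝕜 M]
    [PosSMulMono 𝕜 M] [AddCommMonoid Λ] [SMul 𝕜 Λ] [Fintype S] [Fintype D] (E : Set (S × D))
    {T : Set Λ} {c : Λ → S → M} {e : Λ → D → M}
    (hc : ConcaveOn 𝕜 T c) (he : ConcaveOn 𝕜 T e) {x y : Λ} (hx : x ∈ T) (hy : y ∈ T)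
    {a b : 𝕜} (ha : 0 ≤ a) (hb : 0 ≤ b) (hab : a + b = 1) :
    a • feasibleFlows E (c x) (e x) + b • feasibleFlows E (c y) (e y) ⊆
      feasibleFlows E (c (a • x + b • y)) (e (a • x + b • y)) :=
  calc a • feasibleFlows E (c x) (e x) + b • feasibleFlows E (c y) (e y)
      ⊆ feasibleFlows E (a • c x) (a • e x) + feasibleFlows E (b • c y) (b • e y) :=
        Set.add_subset_add (smul_feasibleFlows_subset E _ _ ha) (smul_feasibleFlows_subset E _ _ hb)
    _ ⊆ feasibleFlows E (a • c x + b • c y) (a • e x + b • e y) :=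
        add_feasibleFlows_subset E _ _ _ _
    _ ⊆ feasibleFlows E (c (a • x + b • y)) (e (a • x + b • y)) :=
        feasibleFlows_mono E (hc.2 hx hy ha hb hab) (he.2 hx hy ha hb hab)

theorem stmt_9_general {𝕜 Λ M S D : Type*} [Field 𝕜] [LinearOrder 𝕜] [IsStrictOrderedRing 𝕜]
    [AddCommGroup M] [PartialOrder M] [IsOrderedAddMonoid M] [Module 𝕜 M] [PosSMulMono 𝕜 M]
    [AddCommMonoid Λ] [Preorder Λ] [Module 𝕜 Λ] [Fintype S] [Fintype D] (E : Set (S × D))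
    {T : Set Λ} {c : Λ → S → M} {e : Λ → D → M}
    (hc_mono : MonotoneOn c T) (hc : ConcaveOn 𝕜 T c)
    (he_mono : MonotoneOn e T) (he : ConcaveOn 𝕜 T e) {F : Λ → M}
    (hF : ∀ x ∈ T, IsLUB ((fun g ↦ ∑ p, g p) '' feasibleFlows E (c x) (e x)) (F x)) :
    MonotoneOn F T ∧ ConcaveOn 𝕜 T F := by
  have hsum : ConcaveOn 𝕜 Set.univ (fun g : S × D → M ↦ ∑ p, g p) :=
    ⟨convex_univ, by simp [Finset.sum_add_distrib, Finset.smul_sum]⟩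
  refine ⟨fun x hx y hy hxy ↦ ?_, ?_⟩
  · exact (hF x hx).mono (hF y hy) <| Set.image_mono <|
      feasibleFlows_mono E (hc_mono hx hy hxy) (he_mono hx hy hxy)
  · exact concaveOn_of_isLUB_image hc.1 hsum (fun _ _ ↦ Set.subset_univ _)
      (fun x hx y hy a b ha hb hab ↦ smul_feasibleFlows_add_smul_feasibleFlows_subset E hc he
        hx hy ha.le hb.le hab) hF

theorem concaveOn_min_const {ι 𝕜 M : Type*} [Semiring 𝕜] [PartialOrder 𝕜]
    [AddCommMonoid M] [LinearOrder M] [IsOrderedAddMonoid M] [Module 𝕜 M]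
    [PosSMulStrictMono 𝕜 M] {T : Set M} (hT : Convex 𝕜 T) (s : ι → M) :
    ConcaveOn 𝕜 T fun x i ↦ min x (s i) :=
  ⟨hT, fun _ hx _ hy _ _ ha hb hab i ↦
    ((concaveOn_id hT).inf (concaveOn_const (s i) hT)).2 hx hy ha hb hab⟩

/-- the parametric maximum-flow function `F(λ)`, where supplier `i`'s capacity is
`min (λ, s i)`, is weakly increasing and concave on `[0, ∞)`. -/
theorem stmt_9 {S D : Type*} [Fintype S] [Fintype D] (E : Set (S × D))
    (s : S → ℝ) (d : D → ℝ) (hs : ∀ i, 0 ≤ s i) (hd : ∀ j, 0 ≤ d j)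
    (F : ℝ → ℝ)
    (hF : ∀ lam : ℝ, 0 ≤ lam →
      IsGreatest {t : ℝ | ∃ g : S × D → ℝ,
        (∀ p, 0 ≤ g p) ∧ (∀ p, p ∉ E → g p = 0) ∧
        (∀ i, ∑ j, g (i, j) ≤ min lam (s i)) ∧
        (∀ j, ∑ i, g (i, j) ≤ d j) ∧
        t = ∑ p, g p} (F lam)) :
    MonotoneOn F (Set.Ici 0) ∧ ConcaveOn ℝ (Set.Ici 0) F :=
  stmt_9_general E (fun _ _ _ _ hxy i ↦ min_le_min_right (s i) hxy)
    (concaveOn_min_const (convex_Ici 0) s) monotoneOn_const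
    (concaveOn_const d (convex_Ici 0)) fun lam hlam ↦ by
      simpa [feasibleFlows, Set.image, and_assoc, eq_comm] using (hF lam hlam).isLUB
end

section
/- Let A ⊆ ℝ^n be a convex set and suppose z, w ∈ A each Lorenz dominate every element of A. Then z = w; that is, a convex set admits at most one Lorenz dominant element. -/
/-- `σ_k(z)`: the sum of the `k` smallest coordinates of `z`, i.e. the minimum of
`∑_{i ∈ K} z i` over `k`-element subsets `K`. -/
noncomputable def lorenzSum (n : ℕ) (z : Fin n → ℝ) (k : ℕ) : ℝ :=
  sInf {t : ℝ | ∃ K : Finset (Fin n), K.card = k ∧ t = ∑ i ∈ K, z i}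

/-- `z` Lorenz dominates `w`: `σ_k(z) ≥ σ_k(w)` for every `1 ≤ k ≤ n`. -/
def LorenzDom (n : ℕ) (z w : Fin n → ℝ) : Prop :=
  ∀ k : ℕ, 1 ≤ k → k ≤ n → lorenzSum n w k ≤ lorenzSum n z k

/-!
Let `m` lie strictly between `z` and `w`, both of which Lorenz dominate `m`, and let `K` index the
`k` smallest coordinates of `m`. Then `∑_K m = σ_k(m)` is at most `σ_k(z) ≤ ∑_K z` and at most
`σ_k(w) ≤ ∑_K w`, yet it lies strictly between `∑_K z` and `∑_K w` unless these agree. Hence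
`∑_K z = ∑_K w` for every such `K`, and two sets `K` that differ only by the index `j` give
`z j = w j`.
-/

theorem eq_of_mem_openSegment_of_le {𝕜 E : Type*} [Semiring 𝕜] [PartialOrder 𝕜] [AddCommMonoid E]
    [LinearOrder E] [IsOrderedCancelAddMonoid E] [Module 𝕜 E] [PosSMulStrictMono 𝕜 E]
    {x y c : E} (hc : c ∈ openSegment 𝕜 x y) (hx : c ≤ x) (hy : c ≤ y) : x = y := by
  rcases lt_trichotomy x y with hxy | rfl | hyx
  · exact absurd (openSegment_subset_Ioo hxy hc).1 hx.not_gt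
  · rfl
  · rw [openSegment_symm] at hc
    exact absurd (openSegment_subset_Ioo hyx hc).1 hy.not_gt

theorem sum_le_sum_of_card_eq_of_forall_le {ι M : Type*} [AddCommMonoid M] [Preorder M]
    [IsOrderedCancelAddMonoid M] {f : ι → M} {K L : Finset ι} (hcard : K.card = L.card)
    (hK : ∀ i ∈ K, ∀ j ∉ K, f i ≤ f j) : ∑ i ∈ K, f i ≤ ∑ i ∈ L, f i := by
  classical
  rw [← Finset.sum_sdiff_le_sum_sdiff]
  let e : ↥(K \ L) ≃ ↥(L \ K) := Finset.equivOfCardEq (Finset.card_sdiff_comm hcard)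
  calc
    ∑ i ∈ K \ L, f i = ∑ i : ↥(K \ L), f i := (Finset.sum_coe_sort _ f).symm
    _ ≤ ∑ i : ↥(K \ L), f (e i) := Finset.sum_le_sum fun i _ ↦
      hK i (Finset.mem_sdiff.1 i.2).1 (e i) (Finset.mem_sdiff.1 (e i).2).2
    _ = ∑ j : ↥(L \ K), f j := e.sum_comp fun j ↦ f j
    _ = ∑ j ∈ L \ K, f j := Finset.sum_coe_sort _ f

theorem eq_of_forall_sum_eq_of_forall_le {ι M α : Type*} [Finite ι] [AddCommMonoid M]
    [IsRightCancelAdd M] [LinearOrder α] (f : ι → α) {z w : ι → M}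
    (h : ∀ K : Finset ι, (∀ i ∈ K, ∀ j ∉ K, f i ≤ f j) → ∑ i ∈ K, z i = ∑ i ∈ K, w i) :
    z = w := by
  classical
  cases nonempty_fintype ι
  funext j
  let K : Finset ι := {i | f i < f j}
  have hjK : j ∉ K := by simp [K]
  have hK : ∑ i ∈ K, z i = ∑ i ∈ K, w i := h K (by grind)
  have hjK_sum : ∑ i ∈ insert j K, z i = ∑ i ∈ insert j K, w i := h (insert j K) (by grind)
  rw [Finset.sum_insert hjK, Finset.sum_insert hjK, hK] at hjK_sum
  exact add_right_cancel hjK_sum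

section Lorenz

variable {n : ℕ} {z w m : Fin n → ℝ} {K : Finset (Fin n)}

theorem lorenzSum_card_le_sum (z : Fin n → ℝ) (K : Finset (Fin n)) :
    lorenzSum n z K.card ≤ ∑ i ∈ K, z i := by
  refine csInf_le (Set.Finite.bddBelow ?_) ⟨K, rfl, rfl⟩
  refine (Set.finite_range fun L : Finset (Fin n) ↦ ∑ i ∈ L, z i).subset ?_
  rintro _ ⟨L, -, rfl⟩
  exact ⟨L, rfl⟩

theorem sum_le_lorenzSum_card (hK : ∀ i ∈ K, ∀ j ∉ K, z i ≤ z j) :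
    ∑ i ∈ K, z i ≤ lorenzSum n z K.card := by
  refine le_csInf ⟨_, K, rfl, rfl⟩ ?_
  rintro _ ⟨L, hL, rfl⟩
  exact sum_le_sum_of_card_eq_of_forall_le hL.symm hK

theorem LorenzDom.sum_le_sum (h : LorenzDom n z m) (hK : ∀ i ∈ K, ∀ j ∉ K, m i ≤ m j) :
    ∑ i ∈ K, m i ≤ ∑ i ∈ K, z i := by
  rcases K.eq_empty_or_nonempty with rfl | hne
  · simp
  calc
    ∑ i ∈ K, m i ≤ lorenzSum n m K.card := sum_le_lorenzSum_card hK
    _ ≤ lorenzSum n z K.card := h _ hne.card_pos (card_finset_fin_le K)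
    _ ≤ ∑ i ∈ K, z i := lorenzSum_card_le_sum z K

theorem stmt_17_general (hm : m ∈ openSegment ℝ z w) (hz : LorenzDom n z m)
    (hw : LorenzDom n w m) : z = w := by
  refine eq_of_forall_sum_eq_of_forall_le m fun K hK ↦ ?_
  have hsum : ∑ i ∈ K, m i ∈ openSegment ℝ (∑ i ∈ K, z i) (∑ i ∈ K, w i) := by
    obtain ⟨a, b, ha, hb, hab, rfl⟩ := hm
    exact ⟨a, b, ha, hb, hab, by simp [Finset.sum_add_distrib, Finset.mul_sum]⟩
  exact eq_of_mem_openSegment_of_le hsum (hz.sum_le_sum hK) (hw.sum_le_sum hK)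

end Lorenz

/-- a convex set admits at most one Lorenz dominant element. -/
theorem stmt_17 (n : ℕ) (A : Set (Fin n → ℝ)) (hA : Convex ℝ A)
    (z w : Fin n → ℝ) (hz : z ∈ A) (hw : w ∈ A)
    (hzd : ∀ a ∈ A, LorenzDom n z a) (hwd : ∀ a ∈ A, LorenzDom n w a) :
    z = w :=
  have hmid : midpoint ℝ z w ∈ A := hA.midpoint_mem hz hw
  stmt_17_general (midpoint_mem_openSegment z w) (hzd _ hmid) (hwd _ hmid)
end
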